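/- arXiv:1711.09132 — 2 statements merged into one kernel-verified Lean document; each statement's English description precedes it below -/
import Mathlib

section
/- Let x, y be real numbers with x ≥ 0 and y ≥ 0. Then the complex 2×2 matrix y·𝟙₂ + i·(x − 1)·J (entrywise coercion of the real matrices into ℂ) is positive semidefinite if and only if y ≥ |1 − x|. (This is the complete positivity condition for the phase covariant Gaussian channel Λ_{x,y} with X = √x·𝟙 and Y = y·𝟙.) -/
open Matrix Complex
open scoped ComplexOrder

/-- The one-mode symplectic form. -/
def Jmat : Matrix (Fin 2) (Fin 2) ℝ := !![0, 1; -1, 0]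

/-!
If `K` is a Hermitian matrix with `K * K = 1` and `K ≠ ±1`, its eigenvalues are exactly `1` and
`-1`, so those of `a • 1 + b • K` are `a + b` and `a - b`, and the matrix is positive semidefinite
iff `|b| ≤ a`. When `S` is a real skew-symmetric matrix with `S * S = -1`, as is the symplectic
form, `K = i S` is such a matrix. The eigenprojections of `K` are `(1 ± K) / 2`; compressing to
them reads off the two eigenvalues without diagonalizing.
-/

section HermitianInvolution

variable {n 𝕜 : Type*} [RCLike 𝕜] {K : Matrix n n 𝕜} {a b : ℝ}

theorem nonneg_of_posSemidef_smul [Finite n] {P : Matrix n n 𝕜} {c : ℝ} (hP : P.PosSemidef)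
    (hP_ne : P ≠ 0) (hcP : (c • P).PosSemidef) : 0 ≤ c := by
  have := Fintype.ofFinite n
  have trace_pos : 0 < P.trace :=
    lt_of_le_of_ne hP.trace_nonneg fun h => hP_ne (hP.trace_eq_zero_iff.mp h.symm)
  have smul_trace_nonneg : 0 ≤ c • P.trace := trace_smul c P ▸ hcP.trace_nonneg
  exact nonneg_of_smul_nonneg_of_pos_right smul_trace_nonneg trace_pos

variable [Fintype n] [DecidableEq n]

theorem posSemidef_one_add_of_mul_self_eq_one (hK : K.IsHermitian) (hKK : K * K = 1) :
    (1 + K).PosSemidef := by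
  have eq_smul_gram : 1 + K = (1 / 2 : ℝ) • ((1 + K)ᴴ * (1 + K)) := by
    rw [conjTranspose_add, conjTranspose_one, hK.eq, mul_add, add_mul, add_mul, hKK]
    simp only [one_mul, mul_one]
    module
  rw [eq_smul_gram]
  exact (posSemidef_conjTranspose_mul_self (1 + K)).smul (by norm_num)

theorem posSemidef_smul_one_add_smul_of_abs_le (hK : K.IsHermitian) (hKK : K * K = 1)
    (hab : |b| ≤ a) : (a • (1 : Matrix n n 𝕜) + b • K).PosSemidef := by
  obtain ⟨neg_a_le_b, b_le_a⟩ := abs_le.mp hab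
  have spectral_decomposition : a • (1 : Matrix n n 𝕜) + b • K =
      ((a + b) / 2) • (1 + K) + ((a - b) / 2) • (1 + -K) := by
    module
  rw [spectral_decomposition]
  exact ((posSemidef_one_add_of_mul_self_eq_one hK hKK).smul (by linarith)).add
    ((posSemidef_one_add_of_mul_self_eq_one hK.neg (by rwa [neg_mul_neg])).smul (by linarith))

theorem add_nonneg_of_posSemidef_smul_one_add_smul (hK : K.IsHermitian) (hKK : K * K = 1)
    (hK_ne_neg_one : K ≠ -1) (h : (a • (1 : Matrix n n 𝕜) + b • K).PosSemidef) : 0 ≤ a + b := by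
  have compression : (1 + K)ᴴ * (a • (1 : Matrix n n 𝕜) + b • K) * (1 + K) =
      (2 * (a + b)) • (1 + K) := by
    rw [conjTranspose_add, conjTranspose_one, hK.eq]
    simp only [mul_add, add_mul, mul_smul_comm, smul_mul_assoc, one_mul, mul_one, hKK]
    module
  have compression_posSemidef : ((2 * (a + b)) • (1 + K)).PosSemidef :=
    compression ▸ h.conjTranspose_mul_mul_same (1 + K)
  have one_add_ne_zero : 1 + K ≠ 0 := fun h₀ => hK_ne_neg_one (eq_neg_of_add_eq_zero_right h₀)
  have := nonneg_of_posSemidef_smul (posSemidef_one_add_of_mul_self_eq_one hK hKK)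
    one_add_ne_zero compression_posSemidef
  linarith

theorem posSemidef_smul_one_add_smul_iff_abs_le (hK : K.IsHermitian) (hKK : K * K = 1)
    (hK_ne_one : K ≠ 1) (hK_ne_neg_one : K ≠ -1) :
    (a • (1 : Matrix n n 𝕜) + b • K).PosSemidef ↔ |b| ≤ a := by
  refine ⟨fun h => ?_, posSemidef_smul_one_add_smul_of_abs_le hK hKK⟩
  have nonneg_add : 0 ≤ a + b := add_nonneg_of_posSemidef_smul_one_add_smul hK hKK hK_ne_neg_one h
  have nonneg_sub : 0 ≤ a + -b :=
    add_nonneg_of_posSemidef_smul_one_add_smul hK.neg (by rwa [neg_mul_neg])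
      (neg_injective.ne hK_ne_one) (by rwa [neg_smul_neg])
  exact abs_le.mpr ⟨by linarith, by linarith⟩

end HermitianInvolution

section SkewSymmetric

variable {n : Type*} {S : Matrix n n ℝ}

theorem isHermitian_I_smul_map_ofReal (hS : Sᵀ = -S) : (I • S.map ofReal).IsHermitian := by
  ext i j
  have skew_apply : S j i = -S i j := congrFun₂ hS i j
  simp [skew_apply]

theorem I_smul_map_ofReal_mul_self [Fintype n] [DecidableEq n] (hSS : S * S = -1) :
    (I • S.map ofReal) * (I • S.map ofReal) = 1 := by
  have map_mul_self : S.map ofReal * S.map ofReal = -1 := by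
    have := congrArg ofRealHom.mapMatrix hSS
    rwa [map_mul, map_neg, map_one] at this
  rw [smul_mul_smul_comm, map_mul_self, I_mul_I, neg_smul_neg, one_smul]

theorem I_smul_map_ofReal_apply_self (hS : Sᵀ = -S) (i : n) : (I • S.map ofReal) i i = 0 := by
  have diag_eq_zero : S i i = 0 := self_eq_neg.mp (congrFun₂ hS i i)
  simp [diag_eq_zero]

theorem phase_covariant_complete_positivity_general [Fintype n] [DecidableEq n] [Nonempty n]
    (hS : Sᵀ = -S) (hSS : S * S = -1) (t y : ℝ) :
    ((y • (1 : Matrix n n ℝ)).map (ofReal ·) + I • ((t • S).map (ofReal ·))).PosSemidef ↔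
      |t| ≤ y := by
  have smul_add_smul_eq : (y • (1 : Matrix n n ℝ)).map (ofReal ·) + I • ((t • S).map (ofReal ·)) =
      y • (1 : Matrix n n ℂ) + t • (I • S.map ofReal) := by
    ext i j
    simp [one_apply, apply_ite ofReal, mul_left_comm]
  obtain ⟨i⟩ := ‹Nonempty n›
  have diag_eq_zero := I_smul_map_ofReal_apply_self hS i
  have ne_one : I • S.map ofReal ≠ 1 := fun h => by
    rw [h, one_apply_eq] at diag_eq_zero
    exact one_ne_zero diag_eq_zero
  have ne_neg_one : I • S.map ofReal ≠ -1 := fun h => by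
    rw [h, neg_apply, one_apply_eq, neg_eq_zero] at diag_eq_zero
    exact one_ne_zero diag_eq_zero
  rw [smul_add_smul_eq]
  exact posSemidef_smul_one_add_smul_iff_abs_le (isHermitian_I_smul_map_ofReal hS)
    (I_smul_map_ofReal_mul_self hSS) ne_one ne_neg_one

end SkewSymmetric

theorem Jmat_transpose : Jmatᵀ = -Jmat := by
  simp [Jmat, ← Matrix.ext_iff, Fin.forall_fin_two]

theorem Jmat_mul_Jmat : Jmat * Jmat = -1 := by
  simp [Jmat, Matrix.one_fin_two]

theorem phase_covariant_complete_positivity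
    (x y : ℝ) (hx : 0 ≤ x) (hy : 0 ≤ y) :
    ((y • (1 : Matrix (Fin 2) (Fin 2) ℝ)).map (Complex.ofReal ·) +
        Complex.I • (((x - 1) • Jmat).map (Complex.ofReal ·))).PosSemidef ↔
      |1 - x| ≤ y := by
  rw [abs_sub_comm]
  exact phase_covariant_complete_positivity_general Jmat_transpose Jmat_mul_Jmat (x - 1) y
end

section
/- In the two-mode noisy interferometry setting, any symmetric L_x with V L_x V + Ω L_x Ω = ∂_x V satisfies ℱ_{xx} := (1/2)·tr( (∂_x V) · L_x ) + 2·(∂_x d)ᵀ V⁻¹ (∂_x d) = (1/(2x²))·[ (x² − y² + 1)² / ( 2 x y cosh(2r) + x² + y² − 1 ) − ( (x − y)² + 1 )·( (x + y)² + 1 ) / ( 2 x y cosh(2r) + x² + y² + 1 ) + 4 a² x / (x + y) + 2 ] + 2 a² ( e^{2r} − 1 ) / ( (x + y)·( y e^{2r} + x ) ). -/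
open Matrix

noncomputable section

/-- The standard symplectic form on two modes (4×4). -/
def Omega4 : Matrix (Fin 4) (Fin 4) ℝ :=
  !![0, 1, 0, 0; -1, 0, 0, 0; 0, 0, 0, 1; 0, 0, -1, 0]

/-- Covariance matrix of the two-mode squeezed input with squeezing parameter `r`. -/
def V0 (r : ℝ) : Matrix (Fin 4) (Fin 4) ℝ :=
  !![Real.cosh (2*r), 0, Real.sinh (2*r), 0;
     0, Real.cosh (2*r), 0, -Real.sinh (2*r);
     Real.sinh (2*r), 0, Real.cosh (2*r), 0;
     0, -Real.sinh (2*r), 0, Real.cosh (2*r)]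

/-- Input displacement `√2·(0, a, 0, a)ᵀ` of the optimal probe. -/
def d0 (a : ℝ) : Fin 4 → ℝ := ![0, Real.sqrt 2 * a, 0, Real.sqrt 2 * a]

/-- Phase rotations by `±φ/2` on the two modes. -/
def Sphase (φ : ℝ) : Matrix (Fin 4) (Fin 4) ℝ :=
  !![Real.cos (φ/2), Real.sin (φ/2), 0, 0;
     -Real.sin (φ/2), Real.cos (φ/2), 0, 0;
     0, 0, Real.cos (φ/2), -Real.sin (φ/2);
     0, 0, Real.sin (φ/2), Real.cos (φ/2)]

/-- Evolved covariance matrix `x·S_φ V₀ S_φᵀ + y·𝟙₄`. -/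
def Vm (r φ x y : ℝ) : Matrix (Fin 4) (Fin 4) ℝ :=
  x • (Sphase φ * V0 r * (Sphase φ)ᵀ) + y • (1 : Matrix (Fin 4) (Fin 4) ℝ)

/-- Evolved displacement `√x·S_φ d₀`. -/
def dm (a φ x : ℝ) : Fin 4 → ℝ := Real.sqrt x • (Sphase φ).mulVec (d0 a)

/-- Entrywise partial derivative of `Vm` with respect to `φ`. -/
def dVdphi (r φ x y : ℝ) : Matrix (Fin 4) (Fin 4) ℝ :=
  Matrix.of fun i j => deriv (fun t => Vm r t x y i j) φ

/-- Entrywise partial derivative of `Vm` with respect to `x`. -/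
def dVdx (r φ x y : ℝ) : Matrix (Fin 4) (Fin 4) ℝ :=
  Matrix.of fun i j => deriv (fun t => Vm r φ t y i j) x

/-- Entrywise partial derivative of `Vm` with respect to `y`. -/
def dVdy (r φ x y : ℝ) : Matrix (Fin 4) (Fin 4) ℝ :=
  Matrix.of fun i j => deriv (fun t => Vm r φ x t i j) y

/-- Entrywise partial derivative of `dm` with respect to `φ`. -/
def ddphi (a φ x : ℝ) : Fin 4 → ℝ := fun i => deriv (fun t => dm a t x i) φ

/-- Entrywise partial derivative of `dm` with respect to `x`. -/
def ddx (a φ x : ℝ) : Fin 4 → ℝ := fun i => deriv (fun t => dm a φ t i) x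

/-- Entrywise partial derivative of `dm` with respect to `y` (the displacement does
not depend on `y`). -/
def ddy (a φ x y : ℝ) : Fin 4 → ℝ := fun i => deriv (fun _t : ℝ => dm a φ x i) y

/-!
Two-mode squeezing is invariant under opposite rotations of the two modes, so `V` does not depend
on `φ`: it is `x • V₀ + y • 1`. Let `G` be the traceless involution with off-diagonal blocks `σ_z`.
Then `V₀`, and with it `V` and `∂ₓV`, act as scalars on the two eigenspaces of `G`, with eigenvalues
`e^{±2r}` for `V₀`. Since `Ω` exchanges these eigenspaces, the equation
`V L V + Ω L Ω = ∂ₓV` has a solution `K` of the same form, found by solving a 2×2 linear system.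
The operator `L ↦ V L V + Ω L Ω` is self-adjoint for the trace form, so `tr (∂ₓV L) = tr (∂ₓV K)`
for every solution `L`. Finally, `∂ₓd` lies in the `-1` eigenspace of `G`, on which `V⁻¹` is the
scalar `(x e^{-2r} + y)⁻¹`.
-/

section SpectralComb

variable {K A : Type*} [Field K] [Ring A] [Algebra K A]

/-- For an involution `G`, the element acting as `p` on the `+1` eigenspace of `G` and as `q` on the
`-1` eigenspace, written in the basis `1, G`. -/
def spectralComb (G : A) (p q : K) : A :=
  ((p + q) / 2) • (1 : A) + ((p - q) / 2) • G

variable {G Ω : A}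

lemma spectralComb_add (p q p' q' : K) :
    spectralComb G p q + spectralComb G p' q' = spectralComb G (p + p') (q + q') := by
  unfold spectralComb
  module

lemma smul_spectralComb (t p q : K) :
    t • spectralComb G p q = spectralComb G (t * p) (t * q) := by
  unfold spectralComb
  module

lemma mul_spectralComb_mul (hΩ : Ω * Ω = -1) (hΩG : Ω * G * Ω = G) (p q : K) :
    Ω * spectralComb G p q * Ω = spectralComb G (-q) (-p) := by
  simp only [spectralComb, mul_add, add_mul, mul_smul_comm, smul_mul_assoc, mul_one, hΩ, hΩG]
  module

variable [NeZero (2 : K)]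

lemma spectralComb_self (p : K) : spectralComb G p p = p • (1 : A) := by
  simp [spectralComb]

lemma spectralComb_mul (hG : G * G = 1) (p q p' q' : K) :
    spectralComb G p q * spectralComb G p' q' = spectralComb G (p * p') (q * q') := by
  have h2 : (2 : K) ≠ 0 := two_ne_zero
  simp only [spectralComb, mul_add, add_mul, mul_smul_comm, smul_mul_assoc, mul_one, one_mul, hG]
  match_scalars <;> field_simp <;> ring

end SpectralComb

section MatrixSpectralComb

variable {K n : Type*} [Field K] [Fintype n] [DecidableEq n] {G : Matrix n n K}

lemma trace_spectralComb (hG : G.trace = 0) (p q : K) :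
    (spectralComb G p q).trace = Fintype.card n * ((p + q) / 2) := by
  simp [spectralComb, hG, mul_comm]

variable [NeZero (2 : K)]

lemma spectralComb_mulVec_of_mulVec_eq_neg {u : n → K} (hu : G *ᵥ u = -u) (p q : K) :
    spectralComb G p q *ᵥ u = q • u := by
  have h2 : (2 : K) ≠ 0 := two_ne_zero
  simp only [spectralComb, add_mulVec, smul_mulVec, one_mulVec, hu]
  match_scalars
  field_simp
  ring

lemma inv_spectralComb (hG : G * G = 1) {p q : K} (hp : p ≠ 0) (hq : q ≠ 0) :
    (spectralComb G p q)⁻¹ = spectralComb G p⁻¹ q⁻¹ := by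
  apply inv_eq_right_inv
  rw [spectralComb_mul hG, mul_inv_cancel₀ hp, mul_inv_cancel₀ hq, spectralComb_self, one_smul]

end MatrixSpectralComb

section SLDMap

/-- The operator `L ↦ V L V + Ω L Ω`. For a Gaussian state with covariance matrix `V`, the quadratic
part of the symmetric logarithmic derivative in a parameter `ζ` is its preimage of `∂_ζ V`. -/
def sldMap {A : Type*} [NonUnitalSemiring A] (V Ω L : A) : A :=
  V * L * V + Ω * L * Ω

lemma trace_sldMap_mul {R n : Type*} [CommSemiring R] [Fintype n]
    (V Ω K L : Matrix n n R) :
    (sldMap V Ω K * L).trace = (sldMap V Ω L * K).trace := by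
  have trace_conj_mul (W : Matrix n n R) : (W * K * W * L).trace = (W * L * W * K).trace := by
    rw [Matrix.mul_assoc (W * K), trace_mul_comm, ← Matrix.mul_assoc]
  simp only [sldMap, Matrix.add_mul, trace_add, trace_conj_mul]

variable {K : Type*} [Field K] [NeZero (2 : K)]

lemma sldMap_spectralComb {A : Type*} [Ring A] [Algebra K A] {G Ω : A} (hG : G * G = 1)
    (hΩ : Ω * Ω = -1) (hΩG : Ω * G * Ω = G) (v w k l : K) :
    sldMap (spectralComb G v w) Ω (spectralComb G k l) =
      spectralComb G (v ^ 2 * k - l) (w ^ 2 * l - k) := by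
  rw [sldMap, spectralComb_mul hG, spectralComb_mul hG, mul_spectralComb_mul hΩ hΩG,
    spectralComb_add]
  congr 1 <;> ring

lemma sldMap_spectralComb_solution {A : Type*} [Ring A] [Algebra K A] {G Ω : A} (hG : G * G = 1)
    (hΩ : Ω * Ω = -1) (hΩG : Ω * G * Ω = G) {v w : K} (hvw : (v * w) ^ 2 - 1 ≠ 0) (p q : K) :
    sldMap (spectralComb G v w) Ω
        (spectralComb G ((w ^ 2 * p + q) / ((v * w) ^ 2 - 1))
          ((v ^ 2 * q + p) / ((v * w) ^ 2 - 1))) =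
      spectralComb G p q := by
  rw [sldMap_spectralComb hG hΩ hΩG]
  congr 1 <;> rw [mul_div_assoc', ← sub_div, div_eq_iff hvw] <;> ring

lemma trace_spectralComb_mul_of_sldMap_eq {n : Type*} [Fintype n] [DecidableEq n]
    {G Ω L : Matrix n n K} {v w p q : K} (hG : G * G = 1) (hGtr : G.trace = 0)
    (hΩ : Ω * Ω = -1) (hΩG : Ω * G * Ω = G) (hvw : (v * w) ^ 2 - 1 ≠ 0)
    (hL : sldMap (spectralComb G v w) Ω L = spectralComb G p q) :
    (spectralComb G p q * L).trace =
      Fintype.card n * (((w * p) ^ 2 + (v * q) ^ 2 + 2 * (p * q)) / ((v * w) ^ 2 - 1) / 2) := by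
  rw [← sldMap_spectralComb_solution hG hΩ hΩG hvw p q, trace_sldMap_mul, hL,
    spectralComb_mul hG, trace_spectralComb hGtr]
  ring

end SLDMap

section Interferometer

/-- The involution with zero diagonal blocks and off-diagonal blocks `σ_z`, which carries the
correlations between the two modes of the squeezed input. -/
def modeCorrelation : Matrix (Fin 4) (Fin 4) ℝ :=
  !![0, 0, 1, 0; 0, 0, 0, -1; 1, 0, 0, 0; 0, -1, 0, 0]

lemma modeCorrelation_mul_self : modeCorrelation * modeCorrelation = 1 := by
  ext i j
  fin_cases i <;> fin_cases j <;> simp [modeCorrelation, mul_apply, Fin.sum_univ_four]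

lemma trace_modeCorrelation : modeCorrelation.trace = 0 := by
  simp [modeCorrelation, trace, Fin.sum_univ_four]

lemma Omega4_mul_self : Omega4 * Omega4 = -1 := by
  ext i j
  fin_cases i <;> fin_cases j <;> simp [Omega4, mul_apply, Fin.sum_univ_four]

lemma Omega4_mul_modeCorrelation_mul_Omega4 :
    Omega4 * modeCorrelation * Omega4 = modeCorrelation := by
  ext i j
  fin_cases i <;> fin_cases j <;> simp [Omega4, modeCorrelation, mul_apply, Fin.sum_univ_four]

lemma Sphase_mul_transpose (φ : ℝ) : Sphase φ * (Sphase φ)ᵀ = 1 := by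
  ext i j
  fin_cases i <;> fin_cases j <;>
    simp [Sphase, mul_apply, Fin.sum_univ_four] <;> linarith [Real.sin_sq_add_cos_sq (φ / 2)]

lemma commute_Sphase_modeCorrelation (φ : ℝ) : Commute (Sphase φ) modeCorrelation := by
  ext i j
  fin_cases i <;> fin_cases j <;> simp [Sphase, modeCorrelation, mul_apply, Fin.sum_univ_four]

lemma V0_eq_spectralComb (r : ℝ) :
    V0 r = spectralComb modeCorrelation (Real.exp (2 * r)) (Real.exp (2 * r))⁻¹ := by
  rw [spectralComb, ← Real.exp_neg, ← Real.cosh_eq, ← Real.sinh_eq]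
  ext i j
  fin_cases i <;> fin_cases j <;> simp [V0, modeCorrelation]

lemma commute_Sphase_V0 (φ r : ℝ) : Commute (Sphase φ) (V0 r) := by
  rw [V0_eq_spectralComb, spectralComb]
  exact ((Commute.one_right _).smul_right _).add_right
    ((commute_Sphase_modeCorrelation φ).smul_right _)

lemma Vm_eq_smul_V0_add (r φ x y : ℝ) : Vm r φ x y = x • V0 r + y • 1 := by
  rw [Vm, (commute_Sphase_V0 φ r).eq, Matrix.mul_assoc, Sphase_mul_transpose, Matrix.mul_one]

lemma Vm_eq_spectralComb (r φ x y : ℝ) :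
    Vm r φ x y = spectralComb modeCorrelation (x * Real.exp (2 * r) + y)
      (x * (Real.exp (2 * r))⁻¹ + y) := by
  rw [Vm_eq_smul_V0_add, V0_eq_spectralComb, smul_spectralComb,
    ← spectralComb_self (G := modeCorrelation) y, spectralComb_add]

lemma dVdx_eq_V0 (r φ x y : ℝ) : dVdx r φ x y = V0 r := by
  ext i j
  simp [dVdx, Vm_eq_smul_V0_add]

lemma ddx_eq_smul_Sphase_mulVec (a φ : ℝ) {x : ℝ} (hx : x ≠ 0) :
    ddx a φ x = (1 / (2 * √x)) • Sphase φ *ᵥ d0 a := by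
  ext i
  exact ((Real.hasDerivAt_sqrt hx).mul_const _).deriv

lemma modeCorrelation_mulVec_d0 (a : ℝ) : modeCorrelation *ᵥ d0 a = -d0 a := by
  ext i
  fin_cases i <;> simp [modeCorrelation, d0, mulVec, dotProduct, Fin.sum_univ_four]

lemma modeCorrelation_mulVec_ddx (a φ : ℝ) {x : ℝ} (hx : x ≠ 0) :
    modeCorrelation *ᵥ ddx a φ x = -ddx a φ x := by
  rw [ddx_eq_smul_Sphase_mulVec a φ hx, mulVec_smul, mulVec_mulVec,
    ← (commute_Sphase_modeCorrelation φ).eq, ← mulVec_mulVec, modeCorrelation_mulVec_d0,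
    mulVec_neg, smul_neg]

lemma d0_dotProduct_self (a : ℝ) : d0 a ⬝ᵥ d0 a = 4 * a ^ 2 := by
  simp only [d0, dotProduct, Fin.sum_univ_four, cons_val]
  linear_combination 2 * a ^ 2 * Real.mul_self_sqrt (zero_le_two (α := ℝ))

lemma ddx_dotProduct_self (a φ : ℝ) {x : ℝ} (hx : 0 < x) :
    ddx a φ x ⬝ᵥ ddx a φ x = a ^ 2 / x := by
  have norm_Sphase : Sphase φ *ᵥ d0 a ⬝ᵥ Sphase φ *ᵥ d0 a = 4 * a ^ 2 := by
    rw [dotProduct_mulVec, vecMul_mulVec, mul_eq_one_comm.mp (Sphase_mul_transpose φ),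
      vecMul_one, d0_dotProduct_self]
  rw [ddx_eq_smul_Sphase_mulVec a φ hx.ne', smul_dotProduct, dotProduct_smul, norm_Sphase,
    smul_eq_mul, smul_eq_mul]
  field_simp
  rw [Real.sq_sqrt hx.le]
  ring

end Interferometer

section ClosedForm

variable {r x y : ℝ}

lemma mul_eigenvalues_eq (r x y : ℝ) :
    (x * Real.exp (2 * r) + y) * (x * (Real.exp (2 * r))⁻¹ + y) =
      2 * x * y * Real.cosh (2 * r) + x ^ 2 + y ^ 2 := by
  rw [Real.cosh_eq, Real.exp_neg]
  field_simp
  ring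

lemma one_lt_mul_cosh_add_sq_add_sq (hx : 0 < x) (hy : |1 - x| < y) :
    1 < 2 * x * y * Real.cosh (2 * r) + x ^ 2 + y ^ 2 := by
  have y_pos : 0 < y := (abs_nonneg _).trans_lt hy
  have one_lt_add : 1 < x + y := by linarith [(abs_lt.mp hy).2]
  have cross_term : 2 * x * y ≤ 2 * x * y * Real.cosh (2 * r) :=
    le_mul_of_one_le_right (by positivity) (Real.one_le_cosh _)
  nlinarith

lemma sq_eigenvalue_products_add (r y : ℝ) (hx : x ≠ 0) :
    ((x * (Real.exp (2 * r))⁻¹ + y) * Real.exp (2 * r)) ^ 2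
        + ((x * Real.exp (2 * r) + y) * (Real.exp (2 * r))⁻¹) ^ 2
        + 2 * (Real.exp (2 * r) * (Real.exp (2 * r))⁻¹) =
      (2 * x * y * Real.cosh (2 * r)) ^ 2 / x ^ 2
        + 2 * (2 * x * y * Real.cosh (2 * r) + x ^ 2 - y ^ 2 + 1) := by
  rw [Real.cosh_eq, Real.exp_neg]
  field_simp
  ring

lemma partial_fractions_sq_sub_one {D : ℝ} (y : ℝ) (hx : x ≠ 0) (hD_sub : D - 1 ≠ 0)
    (hD_add : D + 1 ≠ 0) :
    ((D - x ^ 2 - y ^ 2) ^ 2 / x ^ 2 + 2 * (D - 2 * y ^ 2 + 1)) / (D ^ 2 - 1) =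
      (1 / (2 * x ^ 2)) * ((x ^ 2 - y ^ 2 + 1) ^ 2 / (D - 1)
        - ((x - y) ^ 2 + 1) * ((x + y) ^ 2 + 1) / (D + 1) + 2) := by
  rw [show D ^ 2 - 1 = (D - 1) * (D + 1) by ring]
  field_simp
  ring

lemma half_trace_dVdx_mul {φ : ℝ} {L : Matrix (Fin 4) (Fin 4) ℝ} (hx : 0 < x) (hy : 0 ≤ y)
    (hdet : 2 * x * y * Real.cosh (2 * r) + x ^ 2 + y ^ 2 ≠ 1)
    (hL : sldMap (Vm r φ x y) Omega4 L = dVdx r φ x y) :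
    (1 / 2) * (dVdx r φ x y * L).trace =
      (1 / (2 * x ^ 2)) *
        ((x ^ 2 - y ^ 2 + 1) ^ 2 / (2 * x * y * Real.cosh (2 * r) + x ^ 2 + y ^ 2 - 1)
          - ((x - y) ^ 2 + 1) * ((x + y) ^ 2 + 1)
              / (2 * x * y * Real.cosh (2 * r) + x ^ 2 + y ^ 2 + 1) + 2) := by
  have hD_sub := sub_ne_zero.2 hdet
  have hD_add : 2 * x * y * Real.cosh (2 * r) + x ^ 2 + y ^ 2 + 1 ≠ 0 := by positivity
  have hvw : ((x * Real.exp (2 * r) + y) * (x * (Real.exp (2 * r))⁻¹ + y)) ^ 2 - 1 ≠ 0 := by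
    rw [sq, mul_self_sub_one, mul_eigenvalues_eq]
    exact mul_ne_zero hD_add hD_sub
  rw [dVdx_eq_V0, V0_eq_spectralComb, Vm_eq_spectralComb] at hL
  rw [dVdx_eq_V0, V0_eq_spectralComb,
    trace_spectralComb_mul_of_sldMap_eq modeCorrelation_mul_self trace_modeCorrelation
      Omega4_mul_self Omega4_mul_modeCorrelation_mul_Omega4 hvw hL,
    mul_eigenvalues_eq, sq_eigenvalue_products_add r y hx.ne',
    ← partial_fractions_sq_sub_one y hx.ne' hD_sub hD_add, Fintype.card_fin]
  ring

lemma ddx_dotProduct_inv_Vm_mulVec (r a φ : ℝ) (hx : 0 < x) (hy : 0 ≤ y) :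
    ddx a φ x ⬝ᵥ (Vm r φ x y)⁻¹ *ᵥ ddx a φ x =
      a ^ 2 / (x * (x * (Real.exp (2 * r))⁻¹ + y)) := by
  have hv : x * Real.exp (2 * r) + y ≠ 0 := by positivity
  have hw : x * (Real.exp (2 * r))⁻¹ + y ≠ 0 := by positivity
  rw [Vm_eq_spectralComb, inv_spectralComb modeCorrelation_mul_self hv hw,
    spectralComb_mulVec_of_mulVec_eq_neg (modeCorrelation_mulVec_ddx a φ hx.ne'),
    dotProduct_smul, ddx_dotProduct_self a φ hx, smul_eq_mul]
  field_simp

end ClosedForm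

theorem qfi_x_x_general {r a φ x y : ℝ} (hx : 0 < x) (hy : 0 ≤ y)
    (hdet : 2 * x * y * Real.cosh (2 * r) + x ^ 2 + y ^ 2 ≠ 1) {L : Matrix (Fin 4) (Fin 4) ℝ}
    (hL : sldMap (Vm r φ x y) Omega4 L = dVdx r φ x y) :
    (1 / 2) * (dVdx r φ x y * L).trace + 2 * (ddx a φ x ⬝ᵥ (Vm r φ x y)⁻¹ *ᵥ ddx a φ x) =
      (1 / (2 * x ^ 2)) *
        ((x ^ 2 - y ^ 2 + 1) ^ 2 / (2 * x * y * Real.cosh (2 * r) + x ^ 2 + y ^ 2 - 1)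
          - ((x - y) ^ 2 + 1) * ((x + y) ^ 2 + 1)
              / (2 * x * y * Real.cosh (2 * r) + x ^ 2 + y ^ 2 + 1)
          + 4 * a ^ 2 * x / (x + y) + 2)
      + 2 * a ^ 2 * (Real.exp (2 * r) - 1)
          / ((x + y) * (y * Real.exp (2 * r) + x)) := by
  have displacement_term : 2 * (a ^ 2 / (x * (x * (Real.exp (2 * r))⁻¹ + y))) =
      (1 / (2 * x ^ 2)) * (4 * a ^ 2 * x / (x + y))
        + 2 * a ^ 2 * (Real.exp (2 * r) - 1) / ((x + y) * (y * Real.exp (2 * r) + x)) := by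
    field_simp
    ring
  rw [half_trace_dVdx_mul hx hy hdet hL, ddx_dotProduct_inv_Vm_mulVec r a φ hx hy,
    displacement_term]
  ring

theorem qfi_x_x (r a φ x y : ℝ) (hr : 0 ≤ r) (hx : 0 < x) (hy : |1 - x| < y)
    (L : Matrix (Fin 4) (Fin 4) ℝ) (hLsymm : L.IsSymm)
    (hL : Vm r φ x y * L * Vm r φ x y + Omega4 * L * Omega4 = dVdx r φ x y) :
    (1/2) * (dVdx r φ x y * L).trace
      + 2 * (ddx a φ x ⬝ᵥ (Vm r φ x y)⁻¹.mulVec (ddx a φ x)) =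
    (1 / (2 * x^2)) *
      ( (x^2 - y^2 + 1)^2 / (2 * x * y * Real.cosh (2*r) + x^2 + y^2 - 1)
        - ((x - y)^2 + 1) * ((x + y)^2 + 1)
            / (2 * x * y * Real.cosh (2*r) + x^2 + y^2 + 1)
        + 4 * a^2 * x / (x + y) + 2 )
    + 2 * a^2 * (Real.exp (2*r) - 1)
        / ((x + y) * (y * Real.exp (2*r) + x)) :=
  qfi_x_x_general hx ((abs_nonneg _).trans hy.le) (one_lt_mul_cosh_add_sq_add_sq hx hy).ne' hL
end
end
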